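/- In the MDP M_mab, the total T-step reward of the best stationary policy satisfies sup_{π∈Π} ∑_{t=1}^T r(h_t^π, π(h_t^π)) ≤ T·ρ* + Δ, where ρ* is the optimal average (per-step) reward. -/

import Mathlib

/-!
STATEMENT 1: In the congested-bandit MDP `M_mab`, the total `T`-step reward of the
best stationary policy satisfies
  `sup_{π∈Π} ∑_{t=1}^T r(h_t^π, π(h_t^π)) ≤ T·ρ* + Δ`,
where `ρ*` is the optimal average (per-step) reward.
-/

open Filter Finset

/-- Histories of the last `Δ` arm choices among `K` arms. -/
abbrev Hist (K Δ : ℕ) := Fin Δ → Fin K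

/-- Number of occurrences `#(h,a)` of arm `a` in the history `h`. -/
def cnt {K Δ : ℕ} (h : Hist K Δ) (a : Fin K) : ℕ :=
  (Finset.univ.filter fun i => h i = a).card

/-- Deterministic history update `h' = [h_{2:Δ}, a]`. -/
def shift {K Δ : ℕ} (h : Hist K Δ) (a : Fin K) : Hist K Δ :=
  fun i => if hi : (i : ℕ) + 1 < Δ then h ⟨(i : ℕ) + 1, hi⟩ else a

/-- Mean reward `r(h,a) = f_cong(a, #(h,a)) · μ_a`. -/
def rew {K Δ : ℕ} (μ : Fin K → ℝ) (f : Fin K → ℕ → ℝ) (h : Hist K Δ) (a : Fin K) : ℝ :=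
  f a (cnt h a) * μ a

/-- History at time `t` obtained by running the stationary policy `π` from `h0`. -/
def trajP {K Δ : ℕ} (h0 : Hist K Δ) (π : Hist K Δ → Fin K) : ℕ → Hist K Δ
  | 0 => h0
  | t + 1 => shift (trajP h0 π t) (π (trajP h0 π t))

/-!
Appending a return word of length at most the diameter closes the trajectory into a cycle of the
transition graph, so it suffices that the mean reward along every cycle is at most `ρ*`. Cutting a
cycle at a repeated state leaves two shorter ones, which reduces this to simple cycles. As no state
repeats on a simple cycle, a stationary policy can follow it forever, and off the cycle it can walk
along shortest paths towards it; its average reward is then the mean reward of the cycle. The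
return word loses at most the span of the rewards per step.
-/

section Dynamics

variable {X : Type*} {f : X → X} {x : X}

theorem exists_iterate_mem_of_decreasing {C : Set X} (d : X → ℕ)
    (hd : ∀ x ∉ C, d (f x) < d x) (x : X) : ∃ n, f^[n] x ∈ C := by
  induction hx : d x using Nat.strong_induction_on generalizing x with
  | _ k ih =>
  subst hx
  by_cases hxC : x ∈ C
  · exact ⟨0, hxC⟩
  · obtain ⟨n, hn⟩ := ih _ (hd x hxC) (f x) rfl
    exact ⟨n + 1, hn⟩

theorem birkhoffSum_mul_of_isPeriodicPt {M : Type*} [AddCommMonoid M] {n : ℕ}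
    (hx : Function.IsPeriodicPt f n x) (φ : X → M) (k : ℕ) :
    birkhoffSum f φ (n * k) x = k • birkhoffSum f φ n x := by
  induction k with
  | zero => simp
  | succ k ih => rw [Nat.mul_succ, birkhoffSum_add, (hx.mul_const k).eq, ih, succ_nsmul]

theorem birkhoffSum_eq_mul_of_tendsto {φ : X → ℝ} {c : ℝ} {n τ : ℕ}
    (hτ : Function.IsPeriodicPt f n (f^[τ] x))
    (hc : Tendsto (fun k : ℕ => birkhoffSum f φ k x / k) atTop (nhds c)) :
    birkhoffSum f φ n (f^[τ] x) = n * c := by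
  rcases Nat.eq_zero_or_pos n with rfl | hn
  · simp
  have hn' : (n : ℝ) ≠ 0 := by exact_mod_cast hn.ne'
  have hsub : Tendsto (fun k => τ + n * k) atTop atTop :=
    tendsto_atTop_mono (fun k => (Nat.le_mul_of_pos_left k hn).trans (Nat.le_add_left _ τ))
      tendsto_id
  have hlim := tendsto_add_mul_div_add_mul_atTop_nhds
    (birkhoffSum f φ τ x) (τ : ℝ) (birkhoffSum f φ n (f^[τ] x)) hn'
  have heq : birkhoffSum f φ n (f^[τ] x) / n = c := by
    refine tendsto_nhds_unique hlim ((hc.comp hsub).congr fun k => ?_)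
    simp [birkhoffSum_add, birkhoffSum_mul_of_isPeriodicPt hτ, mul_comm]
  rw [← heq, mul_div_cancel₀ _ hn']

theorem mem_Icc_of_tendsto_birkhoffSum_div {φ : X → ℝ} {c m M : ℝ} (hφ : ∀ y, φ y ∈ Set.Icc m M)
    (hc : Tendsto (fun k : ℕ => birkhoffSum f φ k x / k) atTop (nhds c)) : c ∈ Set.Icc m M := by
  refine isClosed_Icc.mem_of_tendsto hc ((eventually_gt_atTop 0).mono fun k hk => ?_)
  have hk' : (0 : ℝ) < k := by exact_mod_cast hk
  have hlower := card_nsmul_le_sum (range k) (fun t => φ (f^[t] x)) m fun t _ => (hφ _).1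
  have hupper := sum_le_card_nsmul (range k) (fun t => φ (f^[t] x)) M fun t _ => (hφ _).2
  rw [card_range, nsmul_eq_mul, mul_comm] at hlower hupper
  exact ⟨(le_div_iff₀ hk').2 hlower, (div_le_iff₀ hk').2 hupper⟩

end Dynamics

section ControlledSystem

variable {S A : Type*} (step : S → A → S) (r : S → A → ℝ)

/-- The state–action pairs visited from `s` when the actions of a list are played in order in the
deterministic system `step`; the state reached at the end is `l.foldl step s`. -/
def actionWalk (s : S) : List A → List (S × A)
  | [] => []
  | a :: l => (s, a) :: actionWalk (step s a) l

/-- The total reward collected from `s` along a list of actions. -/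
def totalReward (s : S) (l : List A) : ℝ :=
  ((actionWalk step s l).map (Function.uncurry r)).sum

/-- The autonomous dynamics obtained by controlling `step` with the stationary policy `π`. -/
def closedLoop (π : S → A) (s : S) : S := step s (π s)

/-- The average reward of the stationary policy `π` started at `s` exists, as the limit of
the Birkhoff averages of its rewards, and equals `c`. -/
def HasAverageReward (s : S) (π : S → A) (c : ℝ) : Prop :=
  Tendsto (fun n : ℕ => birkhoffSum (closedLoop step π) (fun x => r x (π x)) n s / n)
    atTop (nhds c)

/-- The stationary policy `π`, started at `s`, begins by playing the actions of `l` in order. -/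
def Follows (π : S → A) (s : S) (l : List A) : Prop :=
  ∀ e ∈ actionWalk step s l, π e.1 = e.2

/-- The walk from `s` along `l` leaves every state at most once. The final state is not counted,
so a closed walk with this property is a simple cycle. -/
def IsSimpleWalk (s : S) (l : List A) : Prop :=
  ((actionWalk step s l).map Prod.fst).Nodup

variable {step r}

theorem length_actionWalk (s : S) (l : List A) : (actionWalk step s l).length = l.length := by
  induction l generalizing s with
  | nil => rfl
  | cons a l ih => simp [actionWalk, ih]

theorem actionWalk_append (s : S) (l l' : List A) :
    actionWalk step s (l ++ l') = actionWalk step s l ++ actionWalk step (l.foldl step s) l' := by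
  induction l generalizing s with
  | nil => rfl
  | cons a l ih => simp [actionWalk, ih]

theorem exists_append_of_mem_actionWalk {s x : S} {a : A} {l : List A}
    (h : (x, a) ∈ actionWalk step s l) :
    ∃ u v, l = u ++ a :: v ∧ u.foldl step s = x := by
  induction l generalizing s with
  | nil => simp [actionWalk] at h
  | cons b l ih =>
    rcases List.mem_cons.1 h with heq | h
    · obtain ⟨rfl, rfl⟩ := Prod.mk.inj heq
      exact ⟨[], l, rfl, rfl⟩
    · obtain ⟨u, v, rfl, hu⟩ := ih h
      exact ⟨b :: u, v, rfl, hu⟩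

theorem totalReward_append (s : S) (l l' : List A) :
    totalReward step r s (l ++ l') =
      totalReward step r s l + totalReward step r (l.foldl step s) l' := by
  simp [totalReward, actionWalk_append]

theorem length_mul_le_totalReward {m : ℝ} (hr : ∀ s a, m ≤ r s a) (s : S) (l : List A) :
    l.length * m ≤ totalReward step r s l := by
  have h := List.card_nsmul_le_sum ((actionWalk step s l).map (Function.uncurry r)) m
    (List.forall_mem_map.2 fun e _ => hr e.1 e.2)
  simpa [totalReward, length_actionWalk] using h

theorem exists_closed_infix_of_not_isSimpleWalk {s : S} {l : List A}
    (hl : ¬ IsSimpleWalk step s l) :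
    ∃ u v w, l = u ++ (v ++ w) ∧ v ≠ [] ∧ w ≠ [] ∧
      v.foldl step (u.foldl step s) = u.foldl step s := by
  induction l generalizing s with
  | nil => simp [IsSimpleWalk, actionWalk] at hl
  | cons a l ih =>
    simp only [IsSimpleWalk, actionWalk, List.map_cons, List.nodup_cons, not_and_or, not_not] at hl
    rcases hl with hs | hl
    · obtain ⟨⟨x, b⟩, hb, rfl⟩ := List.mem_map.1 hs
      obtain ⟨v, w, rfl, hv⟩ := exists_append_of_mem_actionWalk hb
      exact ⟨[], a :: v, b :: w, rfl, by simp, by simp, hv⟩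
    · obtain ⟨u, v, w, rfl, hv, hw, huv⟩ := ih hl
      exact ⟨a :: u, v, w, rfl, hv, hw, huv⟩

theorem totalReward_le_of_forall_simple {g : ℝ}
    (hcycle : ∀ s l, l ≠ [] → l.foldl step s = s → IsSimpleWalk step s l →
      totalReward step r s l ≤ l.length * g)
    (s : S) (l : List A) (hl : l.foldl step s = s) :
    totalReward step r s l ≤ l.length * g := by
  induction hn : l.length using Nat.strong_induction_on generalizing s l with
  | _ n ih =>
  subst hn
  rcases eq_or_ne l [] with rfl | hne
  · simp [totalReward, actionWalk]
  by_cases hsimple : IsSimpleWalk step s l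
  · exact hcycle s l hne hl hsimple
  obtain ⟨u, v, w, rfl, hv, hw, hclosed⟩ := exists_closed_infix_of_not_isSimpleWalk hsimple
  have hrest : (u ++ w).foldl step s = s := by simpa [hclosed] using hl
  have hv_pos := List.length_pos_iff.2 hv
  have hw_pos := List.length_pos_iff.2 hw
  have hv_le := ih v.length (by simp; omega) (u.foldl step s) v hclosed rfl
  have huw_le := ih (u ++ w).length (by simp; omega) s (u ++ w) hrest rfl
  simp only [totalReward_append, hclosed, List.length_append, Nat.cast_add] at huw_le ⊢
  linarith

theorem follows_cons_iff {π : S → A} {s : S} {a : A} {l : List A} :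
    Follows step π s (a :: l) ↔ π s = a ∧ Follows step π (step s a) l :=
  List.forall_mem_cons

theorem exists_follows (step : S → A → S) (π : S → A) (s : S) (n : ℕ) :
    ∃ l : List A, l.length = n ∧ Follows step π s l := by
  induction n generalizing s with
  | zero => exact ⟨[], rfl, by simp [Follows, actionWalk]⟩
  | succ n ih =>
    obtain ⟨l, hlen, hl⟩ := ih (step s (π s))
    exact ⟨π s :: l, by simp [hlen], follows_cons_iff.2 ⟨rfl, hl⟩⟩

theorem IsSimpleWalk.exists_follows [Nonempty A] {s : S} {l : List A}
    (hl : IsSimpleWalk step s l) : ∃ π, Follows step π s l := by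
  have hex : ∀ x, ∃ a, ∀ b, (x, b) ∈ actionWalk step s l → a = b := fun x => by
    by_cases hx : ∃ a, (x, a) ∈ actionWalk step s l
    · obtain ⟨a, ha⟩ := hx
      exact ⟨a, fun b hb => congrArg Prod.snd (List.inj_on_of_nodup_map hl ha hb rfl)⟩
    · exact ⟨Classical.arbitrary A, fun b hb => absurd ⟨b, hb⟩ hx⟩
  choose π hπ using hex
  exact ⟨π, fun e he => hπ e.1 e.2 he⟩

theorem Follows.of_append {π : S → A} {s : S} {l l' : List A}
    (h : Follows step π s (l ++ l')) : Follows step π (l.foldl step s) l' := fun e he =>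
  h e (by rw [actionWalk_append]; exact List.mem_append_right _ he)

theorem Follows.iterate_closedLoop {π : S → A} {s : S} {l : List A} (h : Follows step π s l) :
    (closedLoop step π)^[l.length] s = l.foldl step s := by
  induction l generalizing s with
  | nil => rfl
  | cons a l ih =>
    obtain ⟨rfl, hl⟩ := follows_cons_iff.1 h
    exact ih hl

theorem Follows.birkhoffSum_eq_totalReward {π : S → A} {s : S} {l : List A}
    (h : Follows step π s l) :
    birkhoffSum (closedLoop step π) (fun x => r x (π x)) l.length s = totalReward step r s l := by
  induction l generalizing s with
  | nil => rfl
  | cons a l ih =>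
    obtain ⟨rfl, hl⟩ := follows_cons_iff.1 h
    rw [List.length_cons, birkhoffSum_succ']
    exact congrArg (r s (π s) + ·) (ih hl)

theorem exists_policy_eqOn_and_reaches {C : Set S} (hC : ∀ x, ∃ l : List A, l.foldl step x ∈ C)
    (π₀ : S → A) : ∃ π : S → A, Set.EqOn π π₀ C ∧ ∀ x, ∃ n, (closedLoop step π)^[n] x ∈ C := by
  classical
  have hlen : ∀ x, ∃ n, ∃ l : List A, l.length = n ∧ l.foldl step x ∈ C := fun x =>
    let ⟨l, hl⟩ := hC x
    ⟨l.length, l, rfl, hl⟩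
  let d : S → ℕ := fun x => Nat.find (hlen x)
  have hdecr : ∀ x, ∃ a, x ∉ C → d (step x a) < d x := fun x => by
    obtain ⟨l, hl, hlC⟩ := Nat.find_spec (hlen x)
    cases l with
    | nil => exact ⟨π₀ x, fun hx => absurd hlC hx⟩
    | cons a l =>
      refine ⟨a, fun _ => ?_⟩
      calc d (step x a) ≤ l.length := Nat.find_min' _ ⟨l, rfl, hlC⟩
        _ < d x := by rw [← Nat.succ_le_iff]; exact hl.le
  choose greedy hgreedy using hdecr
  refine ⟨C.piecewise π₀ greedy, C.piecewise_eqOn _ _, exists_iterate_mem_of_decreasing d ?_⟩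
  intro x hx
  simpa [closedLoop, hx] using hgreedy x hx

theorem exists_policy_follows_and_reaches
    {s : S} (hs : ∀ x, ∃ l : List A, l.foldl step x = s) (s₀ : S) {l : List A} (hne : l ≠ [])
    (hl : l.foldl step s = s) (hsimple : IsSimpleWalk step s l) :
    ∃ π, Follows step π s l ∧ ∃ n, (closedLoop step π)^[n] s₀ = s := by
  have : Nonempty A := ⟨l.head hne⟩
  obtain ⟨π₀, hπ₀⟩ := hsimple.exists_follows
  let C : Set S := {x | ∃ a, (x, a) ∈ actionWalk step s l}
  have hsC : s ∈ C := by
    obtain ⟨a, l, rfl⟩ := List.exists_cons_of_ne_nil hne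
    exact ⟨a, List.mem_cons_self⟩
  obtain ⟨π, hEq, hreach⟩ := exists_policy_eqOn_and_reaches (C := C)
    (fun x => (hs x).imp fun _ h => h ▸ hsC) π₀
  have hπ : Follows step π s l := fun e he => (hEq ⟨e.2, he⟩).trans (hπ₀ e he)
  obtain ⟨n, a, ha⟩ := hreach s₀
  obtain ⟨u, v, rfl, hu⟩ := exists_append_of_mem_actionWalk ha
  refine ⟨π, hπ, (a :: v).length + n, ?_⟩
  rw [Function.iterate_add_apply, ← hu, hπ.of_append.iterate_closedLoop, ← List.foldl_append, hl]

theorem totalReward_le_of_foldl_eq_self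
    (hconn : ∀ s s' : S, ∃ l : List A, l.foldl step s = s') {s₀ : S} {ρ : (S → A) → ℝ}
    (hρ : ∀ π, HasAverageReward step r s₀ π (ρ π))
    {g : ℝ} (hg : ∀ π, ρ π ≤ g) {s : S} {l : List A} (hl : l.foldl step s = s) :
    totalReward step r s l ≤ l.length * g := by
  refine totalReward_le_of_forall_simple (fun s l hne hl hsimple => ?_) s l hl
  obtain ⟨π, hπ, τ, rfl⟩ := exists_policy_follows_and_reaches (hconn · s) s₀ hne hl hsimple
  have hper := hπ.iterate_closedLoop.trans hl
  calc totalReward step r _ l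
      = l.length * ρ π := by
        rw [← hπ.birkhoffSum_eq_totalReward, birkhoffSum_eq_mul_of_tendsto hper (hρ π)]
    _ ≤ l.length * g := by gcongr; exact hg π

theorem totalReward_le {m : ℝ} (hr : ∀ s a, m ≤ r s a) {D : ℕ}
    (hD : ∀ s s' : S, ∃ l : List A, l.length ≤ D ∧ l.foldl step s = s')
    {s₀ : S} {ρ : (S → A) → ℝ}
    (hρ : ∀ π, HasAverageReward step r s₀ π (ρ π))
    {g : ℝ} (hg : ∀ π, ρ π ≤ g) (hmg : m ≤ g) (s : S) (l : List A) :
    totalReward step r s l ≤ l.length * g + D * (g - m) := by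
  obtain ⟨l', hlen, hl'⟩ := hD (l.foldl step s) s
  have hclosed := totalReward_le_of_foldl_eq_self
    (fun s s' => (hD s s').imp fun _ => And.right) hρ hg
    (s := s) (l := l ++ l') (by simpa using hl')
  have hback : l'.length * m ≤ totalReward step r (l.foldl step s) l' :=
    length_mul_le_totalReward hr _ l'
  rw [totalReward_append, List.length_append, Nat.cast_add, add_mul] at hclosed
  have hloss : l'.length * (g - m) ≤ D * (g - m) := by gcongr
  linarith

theorem best_stationary_reward_le_avg_general {m M : ℝ}
    (hr : ∀ s a, r s a ∈ Set.Icc m M) {D T : ℕ}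
    (hD : ∀ s s' : S, ∃ l : List A, l.length ≤ D ∧ l.foldl step s = s')
    (s₀ : S) (ρ : (S → A) → ℝ) (hρ : ∀ π, HasAverageReward step r s₀ π (ρ π)) (π : S → A) :
    birkhoffSum (closedLoop step π) (fun s => r s (π s)) T s₀ ≤
      T * (⨆ π', ρ π') + D * (M - m) := by
  have hρ_mem : ∀ π', ρ π' ∈ Set.Icc m M := fun π' =>
    mem_Icc_of_tendsto_birkhoffSum_div (fun s => hr s (π' s)) (hρ π')
  have hle_sup : ∀ π', ρ π' ≤ ⨆ π', ρ π' :=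
    le_ciSup ⟨M, Set.forall_mem_range.2 fun π' => (hρ_mem π').2⟩
  have : Nonempty (S → A) := ⟨π⟩
  have hsup_le : ⨆ π', ρ π' ≤ M := ciSup_le fun π' => (hρ_mem π').2
  obtain ⟨l, rfl, hl⟩ := exists_follows step π s₀ T
  calc birkhoffSum (closedLoop step π) (fun s => r s (π s)) l.length s₀
      = totalReward step r s₀ l := hl.birkhoffSum_eq_totalReward
    _ ≤ l.length * (⨆ π', ρ π') + D * ((⨆ π', ρ π') - m) :=
        totalReward_le (fun s a => (hr s a).1) hD hρ hle_sup
          ((hρ_mem π).1.trans (hle_sup π)) s₀ l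
    _ ≤ l.length * (⨆ π', ρ π') + D * (M - m) := by gcongr

end ControlledSystem

section Histories

variable {K Δ : ℕ}

theorem rew_mem_Icc {μ : Fin K → ℝ} (hμ : ∀ a, μ a ∈ Set.Icc (0 : ℝ) 1) {f : Fin K → ℕ → ℝ}
    (hf : ∀ a j, j ≤ Δ → f a j ∈ Set.Icc (0 : ℝ) 1) (h : Hist K Δ) (a : Fin K) :
    rew μ f h a ∈ Set.Icc (0 : ℝ) 1 := by
  have hcnt : cnt h a ≤ Δ := by
    simpa [cnt] using card_filter_le (univ : Finset (Fin Δ)) (h · = a)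
  exact unitInterval.mul_mem (hf a _ hcnt) (hμ a)

theorem trajP_eq_iterate (h : Hist K Δ) (π : Hist K Δ → Fin K) (t : ℕ) :
    trajP h π t = (closedLoop shift π)^[t] h := by
  induction t with
  | zero => rfl
  | succ t ih => rw [Function.iterate_succ_apply', ← ih]; rfl

theorem sum_rew_trajP (μ : Fin K → ℝ) (f : Fin K → ℕ → ℝ) (h : Hist K Δ)
    (π : Hist K Δ → Fin K) (T : ℕ) :
    ∑ t ∈ range T, rew μ f (trajP h π t) (π (trajP h π t)) =
      birkhoffSum (closedLoop shift π) (fun x => rew μ f x (π x)) T h := by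
  simp only [trajP_eq_iterate, birkhoffSum]

theorem ofFn_shift (h : Hist K Δ) (a : Fin K) :
    List.ofFn (shift h a) = (List.ofFn h ++ [a]).tail := by
  refine List.ext_getElem (by simp) fun i hi _ => ?_
  simp [shift, List.getElem_append]

theorem ofFn_foldl_shift (h : Hist K Δ) (l : List (Fin K)) :
    List.ofFn (l.foldl shift h) = (List.ofFn h ++ l).drop l.length := by
  induction l generalizing h with
  | nil => simp
  | cons a l ih =>
    rw [List.foldl_cons, ih, ofFn_shift, ← List.tail_append_of_ne_nil (by simp), List.drop_tail]
    simp

theorem foldl_shift_ofFn (h h' : Hist K Δ) : (List.ofFn h').foldl shift h = h' :=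
  List.ofFn_injective <| by
    rw [ofFn_foldl_shift, List.drop_left' (by simp)]

end Histories

/-- The `T`-step reward of every stationary policy — hence of the best stationary
policy — is at most `T·ρ* + Δ`, where `ρ π` is the average reward of `π`
(assumed, as in the paper, to exist as the Cesàro limit of the reward sequence)
and `ρ* = ⨆ π, ρ π` is the optimal average reward. -/
theorem best_stationary_reward_le_avg {K Δ T : ℕ} (hK : 0 < K)
    (μ : Fin K → ℝ) (hμ : ∀ a, μ a ∈ Set.Icc (0 : ℝ) 1)
    (f : Fin K → ℕ → ℝ) (hf : ∀ a j, j ≤ Δ → f a j ∈ Set.Ioc (0 : ℝ) 1)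
    (h0 : Hist K Δ)
    (ρ : (Hist K Δ → Fin K) → ℝ)
    (hρ : ∀ π : Hist K Δ → Fin K,
      Tendsto
        (fun n : ℕ =>
          (∑ t ∈ Finset.range n, rew μ f (trajP h0 π t) (π (trajP h0 π t))) / n)
        atTop (nhds (ρ π))) :
    ∀ π : Hist K Δ → Fin K,
      ∑ t ∈ Finset.range T, rew μ f (trajP h0 π t) (π (trajP h0 π t))
        ≤ T * (⨆ π' : Hist K Δ → Fin K, ρ π') + Δ := by
  have hrew : ∀ (h : Hist K Δ) a, rew μ f h a ∈ Set.Icc (0 : ℝ) 1 :=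
    rew_mem_Icc hμ fun a j hj => Set.Ioc_subset_Icc_self (hf a j hj)
  have hdiam : ∀ h h' : Hist K Δ, ∃ l : List (Fin K), l.length ≤ Δ ∧ l.foldl shift h = h' :=
    fun h h' => ⟨List.ofFn h', by simp, foldl_shift_ofFn h h'⟩
  simp only [sum_rew_trajP] at hρ ⊢
  simpa using best_stationary_reward_le_avg_general hrew hdiam h0 ρ hρ
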